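/- Let P₁ be a predictor, and let P₂ be a function taking leakage traces to predictors. Then there exists a predictor P (the concatenation P₁ ++ P₂) such that for all traces k₁ and k₂: if P₁ predicts k₁ and P₂ k₁ predicts k₂, then P predicts k₁ ++ k₂. -/

import Mathlib

/-!
The concatenated predictor runs `P₁` until `P₁` announces the end of its trace, and from there on
answers as `P₂ k₁`, where `k₁` is the part of the trace read so far. It is defined by recursion on
the trace (`Predictor.append`), replacing `P₁` and `P₂` by their residuals after each event.
Prediction obeys the matching recursion (`predicts_nil`, `predicts_cons`): `P` predicts `e :: k` iff
`P []` is the query answered by `e` and the residual of `P` after `e` predicts `k`. The theorem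
then follows by induction on `k₁`.
-/

inductive LeakageEvent (α : Type*) where
  | Leak : α → LeakageEvent α
  | CompNonDet : α → LeakageEvent α

abbrev Trace (α : Type*) := List (LeakageEvent α)

inductive Qevent (α : Type*) where
  | qCompNonDet : Qevent α
  | qLeak : α → Qevent α
  | qEnd : Qevent α

abbrev Predictor (α : Type*) := Trace α → Qevent α

def Predicts {α : Type*} (P : Predictor α) (k : Trace α) : Prop :=
  (∀ k₁ x k₂, k = k₁ ++ [LeakageEvent.Leak x] ++ k₂ → P k₁ = Qevent.qLeak x) ∧
  (∀ k₁ x k₂, k = k₁ ++ [LeakageEvent.CompNonDet x] ++ k₂ → P k₁ = Qevent.qCompNonDet) ∧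
  P k = Qevent.qEnd

/-- The query that a predictor must make just before the event `e`. -/
def LeakageEvent.query {α : Type*} : LeakageEvent α → Qevent α
  | .Leak x => .qLeak x
  | .CompNonDet _ => .qCompNonDet

theorem LeakageEvent.query_ne_qEnd {α : Type*} (e : LeakageEvent α) : e.query ≠ .qEnd := by
  cases e <;> simp [LeakageEvent.query]

theorem predicts_nil {α : Type*} (P : Predictor α) : Predicts P [] ↔ P [] = .qEnd := by
  simp [Predicts]

theorem predicts_cons {α : Type*} (P : Predictor α) (e : LeakageEvent α) (k : Trace α) :
    Predicts P (e :: k) ↔ P [] = e.query ∧ Predicts (fun t => P (e :: t)) k := by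
  constructor
  · rintro ⟨h₁, h₂, h₃⟩
    refine ⟨?_, ?_, ?_, h₃⟩
    · cases e with
      | Leak x => exact h₁ [] x k rfl
      | CompNonDet x => exact h₂ [] x k rfl
    · rintro a x b rfl
      exact h₁ (e :: a) x b rfl
    · rintro a x b rfl
      exact h₂ (e :: a) x b rfl
  · rintro ⟨h₀, h₁, h₂, h₃⟩
    refine ⟨?_, ?_, h₃⟩
    · rintro (_ | ⟨c, a⟩) x b h
      · obtain ⟨rfl, -⟩ := List.cons.inj h
        exact h₀
      · obtain ⟨rfl, hk⟩ := List.cons.inj h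
        exact h₁ a x b hk
    · rintro (_ | ⟨c, a⟩) x b h
      · obtain ⟨rfl, -⟩ := List.cons.inj h
        exact h₀
      · obtain ⟨rfl, hk⟩ := List.cons.inj h
        exact h₂ a x b hk

open Classical in
/-- The concatenation `P₁ ++ P₂`. On a nonempty trace `e :: k` with `P₁` not yet finished, it is the
concatenation of the residuals of `P₁` and `P₂` after `e`, evaluated at `k`. -/
noncomputable def Predictor.append {α : Type*} (P₁ : Predictor α) (P₂ : Trace α → Predictor α) :
    Predictor α
  | [] => if P₁ [] = .qEnd then P₂ [] [] else P₁ []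
  | e :: k =>
    if P₁ [] = .qEnd then P₂ [] (e :: k)
    else Predictor.append (fun t => P₁ (e :: t)) (fun t => P₂ (e :: t)) k

theorem Predictor.append_of_end {α : Type*} {P₁ : Predictor α} (P₂ : Trace α → Predictor α)
    (h : P₁ [] = .qEnd) : Predictor.append P₁ P₂ = P₂ [] := by
  funext k
  cases k <;> simp [Predictor.append, h]

theorem predicts_append {α : Type*} (k₁ k₂ : Trace α) (P₁ : Predictor α)
    (P₂ : Trace α → Predictor α) (h₁ : Predicts P₁ k₁) (h₂ : Predicts (P₂ k₁) k₂) :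
    Predicts (Predictor.append P₁ P₂) (k₁ ++ k₂) := by
  induction k₁ generalizing P₁ P₂ with
  | nil =>
    rw [Predictor.append_of_end P₂ ((predicts_nil P₁).1 h₁)]
    exact h₂
  | cons e k ih =>
    obtain ⟨h₀, h₁⟩ := (predicts_cons P₁ e k).1 h₁
    have hne : P₁ [] ≠ .qEnd := h₀ ▸ e.query_ne_qEnd
    rw [List.cons_append, predicts_cons]
    refine ⟨by simp only [Predictor.append, if_neg hne, h₀], ?_⟩
    simp only [Predictor.append, if_neg hne]
    exact ih _ (fun t => P₂ (e :: t)) h₁ h₂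

theorem predictor_append {α : Type*} (P₁ : Predictor α) (P₂ : Trace α → Predictor α) :
    ∃ P : Predictor α, ∀ k₁ k₂ : Trace α,
      Predicts P₁ k₁ → Predicts (P₂ k₁) k₂ → Predicts P (k₁ ++ k₂) := by
  exact ⟨Predictor.append P₁ P₂, fun k₁ k₂ => predicts_append k₁ k₂ P₁ P₂⟩
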